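/- Let A_1,...,A_l ∈ M(ℂ^d) be selfadjoint with Tr(ρ A_i) = 0 for all i, and let K := (1/l!) Σ_{τ ∈ S(l)} A_{τ(1)} ⊗ ... ⊗ A_{τ(l)}, a quantum symmetric kernel of order l. Then there exist p ∈ ℕ, selfadjoint matrices B_1,...,B_p ∈ M(ℂ^d), and noncommutative polynomials P_0,...,P_{l−2} (elements of the free algebra over ℝ in l+p noncommuting variables) each of degree strictly less than l, all independent of n, such that for every n ≥ l the quantum U-statistic U_n with kernel K satisfies: (l!/n^{l/2}) C(n,l) U_n = S(F_n(A_1),...,F_n(A_l)) + Σ_{t=0}^{l−2} n^{−t/2} P_t(F_n(A_1),...,F_n(A_l), P_n(B_1),...,P_n(B_p)), where S(X_1,...,X_l) := (1/l!) Σ_{τ ∈ S(l)} X_{τ(1)}⋯X_{τ(l)} and P_t is evaluated at the indicated operators. -/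

import Mathlib

open scoped BigOperators
open Matrix
open scoped ComplexOrder

/-- The tensor product of a family of `d × d` matrices, as a matrix indexed by
multi-indices `Fin n → Fin d`. -/
noncomputable def tensorFam {d n : ℕ} (M : Fin n → Matrix (Fin d) (Fin d) ℂ) :
    Matrix (Fin n → Fin d) (Fin n → Fin d) ℂ :=
  Matrix.of fun x y => ∏ i, M i (x i) (y i)

/-- `H^{(i)} = 1 ⊗ ... ⊗ H ⊗ ... ⊗ 1`, with `H` in the `i`-th tensor slot. -/
noncomputable def amp {d n : ℕ} (i : Fin n) (H : Matrix (Fin d) (Fin d) ℂ) :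
    Matrix (Fin n → Fin d) (Fin n → Fin d) ℂ :=
  tensorFam fun j => if j = i then H else 1

/-- The fluctuation observable `F_n(A) := n^{-1/2} Σ_i A^{(i)}`. -/
noncomputable def Fluct {d : ℕ} (n : ℕ) (A : Matrix (Fin d) (Fin d) ℂ) :
    Matrix (Fin n → Fin d) (Fin n → Fin d) ℂ :=
  (Real.sqrt n)⁻¹ • ∑ i : Fin n, amp i A

/-- The empirical average `P_n(B) := n⁻¹ Σ_i B^{(i)}`. -/
noncomputable def Emp {d : ℕ} (n : ℕ) (B : Matrix (Fin d) (Fin d) ℂ) :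
    Matrix (Fin n → Fin d) (Fin n → Fin d) ℂ :=
  ((n : ℝ))⁻¹ • ∑ i : Fin n, amp i B

/-- The ampliation `K^{(β)}` of a kernel `K` of order `l` to `(ℂ^d)^{⊗n}`. -/
noncomputable def ampl {d l n : ℕ} (K : Matrix (Fin l → Fin d) (Fin l → Fin d) ℂ)
    (β : Finset (Fin n)) (hβ : β.card = l) :
    Matrix (Fin n → Fin d) (Fin n → Fin d) ℂ :=
  Matrix.of fun x y =>
    K (fun i => x ((β.orderIsoOfFin hβ i : Fin n)))
        (fun i => y ((β.orderIsoOfFin hβ i : Fin n))) *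
      ∏ j ∈ βᶜ, if x j = y j then (1 : ℂ) else 0

/-- The quantum U-statistic `U_n = C(n,l)⁻¹ Σ_β K^{(β)}`. -/
noncomputable def qUstat {d l : ℕ} (K : Matrix (Fin l → Fin d) (Fin l → Fin d) ℂ)
    (n : ℕ) : Matrix (Fin n → Fin d) (Fin n → Fin d) ℂ :=
  (n.choose l : ℂ)⁻¹ •
    ∑ β ∈ (Finset.powersetCard l (Finset.univ : Finset (Fin n))).attach,
      ampl K β.1 (Finset.mem_powersetCard.mp β.2).2

/-- The symmetrized product `S(X_1, ..., X_m) = (1/m!) Σ_τ X_{τ(1)} ⋯ X_{τ(m)}`. -/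
noncomputable def symProd {N : Type*} [Fintype N] [DecidableEq N] {m : ℕ}
    (X : Fin m → Matrix N N ℂ) : Matrix N N ℂ :=
  (m.factorial : ℝ)⁻¹ • ∑ τ : Equiv.Perm (Fin m), (List.ofFn fun i => X (τ i)).prod

/-- The ℝ-submodule of the free (noncommutative) algebra spanned by the monomials of
degree strictly less than `l` (in the given generators). -/
noncomputable def lowDegree (ι : Type*) (l : ℕ) : Submodule ℝ (FreeAlgebra ℝ ι) :=
  Submodule.span ℝ {x | ∃ m : ℕ, m < l ∧ ∃ w : Fin m → ι,
    x = (List.ofFn fun i => FreeAlgebra.ι ℝ (w i)).prod}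

lemma sum_perm_eq_sum_finset {l : ℕ} {M : Type*} [AddCommGroup M]
    (G : (Fin l → Fin l) → M) :
    ∑ τ : Equiv.Perm (Fin l), G τ =
      ∑ T : Finset (Fin l), (-1 : ℤ) ^ T.card • ∑ f ∈ Fintype.piFinset fun _ => Tᶜ, G f := by
  classical
  have h := Finset.inclusion_exclusion_sum_inf_compl (Finset.univ : Finset (Fin l))
    (fun i => (Finset.univ : Finset (Fin l → Fin l)).filter fun f => ∀ k, f k ≠ i) G
  rw [Finset.powerset_univ] at h
  have hL : ∑ τ : Equiv.Perm (Fin l), G τ = ∑ f ∈ Finset.univ.inf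
      (fun i => ((Finset.univ : Finset (Fin l → Fin l)).filter fun f => ∀ k, f k ≠ i)ᶜ), G f := by
    refine Finset.sum_bij (fun τ _ => ⇑τ) ?_ ?_ ?_ ?_
    · intro τ _
      simp only [Finset.mem_inf, Finset.mem_compl, Finset.mem_filter, Finset.mem_univ, true_and,
        forall_const]
      intro i h
      exact h (τ.symm i) (by simp)
    · intro a _ b _ h
      exact DFunLike.coe_injective h
    · intro f hf
      simp only [Finset.mem_inf, Finset.mem_compl, Finset.mem_filter, Finset.mem_univ, true_and,
        forall_const] at hf
      push Not at hf
      exact ⟨Equiv.ofBijective f ⟨Finite.injective_iff_surjective.mpr hf, hf⟩,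
        Finset.mem_univ _, rfl⟩
    · intros; rfl
  rw [hL, h]
  refine Finset.sum_congr rfl fun T _ => ?_
  congr 1
  refine Finset.sum_congr ?_ fun _ _ => rfl
  ext f
  simp only [Finset.mem_inf, Finset.mem_filter, Finset.mem_univ, true_and, Fintype.mem_piFinset,
    Finset.mem_compl]
  exact ⟨fun h k hk => h _ hk k rfl, fun h i hi k hk => h k (hk ▸ hi)⟩

lemma sum_perm_prod_ofFn {l : ℕ} {R : Type*} [Ring R] (X : Fin l → R) :
    ∑ τ : Equiv.Perm (Fin l), (List.ofFn fun i => X (τ i)).prod =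
      ∑ T : Finset (Fin l), (-1 : ℤ) ^ T.card • (∑ i ∈ Tᶜ, X i) ^ l := by
  classical
  rw [sum_perm_eq_sum_finset fun f => (List.ofFn fun i => X (f i)).prod]
  refine Finset.sum_congr rfl fun T _ => ?_
  congr 1
  have h := (MultilinearMap.mkPiAlgebraFin ℤ l R).map_sum_finset (fun _ j => X j) (fun _ => Tᶜ)
  simpa [MultilinearMap.mkPiAlgebraFin_apply] using h.symm

lemma sum_perm_tensorFam {d l : ℕ} (A : Fin l → Matrix (Fin d) (Fin d) ℂ) :
    ∑ τ : Equiv.Perm (Fin l), tensorFam (fun i => A (τ i)) =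
      ∑ T : Finset (Fin l), (-1 : ℤ) ^ T.card • tensorFam fun _ : Fin l => ∑ i ∈ Tᶜ, A i := by
  classical
  rw [sum_perm_eq_sum_finset fun f => tensorFam fun i => A (f i)]
  refine Finset.sum_congr rfl fun T _ => ?_
  congr 1
  ext x y
  simp only [Matrix.sum_apply, tensorFam, Matrix.of_apply]
  rw [Finset.prod_univ_sum]

lemma tensorFam_mul {d n : ℕ} (M N : Fin n → Matrix (Fin d) (Fin d) ℂ) :
    tensorFam M * tensorFam N = tensorFam fun i => M i * N i := by
  ext x y
  simp only [tensorFam, Matrix.mul_apply, Matrix.of_apply, ← Finset.prod_mul_distrib]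
  rw [Finset.prod_univ_sum, Fintype.piFinset_univ]

lemma tensorFam_one {d n : ℕ} :
    tensorFam (fun _ : Fin n => (1 : Matrix (Fin d) (Fin d) ℂ)) = 1 := by
  ext x y
  simp only [tensorFam, Matrix.of_apply, Matrix.one_apply, funext_iff]
  rw [Finset.prod_ite_zero]
  simp

lemma amp_add {d n : ℕ} (i : Fin n) (H K : Matrix (Fin d) (Fin d) ℂ) :
    amp i (H + K) = amp i H + amp i K := by
  ext x y
  simp only [amp, tensorFam, Matrix.of_apply, Matrix.add_apply,
    ← Finset.mul_prod_erase _ _ (Finset.mem_univ i), if_pos]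
  rw [Finset.prod_congr rfl fun j hj => by rw [if_neg (Finset.ne_of_mem_erase hj)], add_mul]
  congr 2 <;>
  exact Finset.prod_congr rfl fun j hj => by rw [if_neg (Finset.ne_of_mem_erase hj)]

lemma amp_zero {d n : ℕ} (i : Fin n) : amp i (0 : Matrix (Fin d) (Fin d) ℂ) = 0 := by
  have := amp_add i (0 : Matrix (Fin d) (Fin d) ℂ) 0
  simpa using this

lemma amp_sum {d n : ℕ} {κ : Type*} (i : Fin n) (s : Finset κ)
    (H : κ → Matrix (Fin d) (Fin d) ℂ) : amp i (∑ k ∈ s, H k) = ∑ k ∈ s, amp i (H k) :=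
  map_sum (⟨⟨amp i, amp_zero i⟩, amp_add i⟩ :
    Matrix (Fin d) (Fin d) ℂ →+ Matrix (Fin n → Fin d) (Fin n → Fin d) ℂ) H s

lemma Fluct_sum {d : ℕ} {κ : Type*} (n : ℕ) (s : Finset κ)
    (H : κ → Matrix (Fin d) (Fin d) ℂ) :
    Fluct n (∑ k ∈ s, H k) = ∑ k ∈ s, Fluct n (H k) := by
  simp only [Fluct, amp_sum, ← Finset.smul_sum]
  rw [Finset.sum_comm]

lemma amp_mul {d n : ℕ} (i : Fin n) (H K : Matrix (Fin d) (Fin d) ℂ) :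
    amp i H * amp i K = amp i (H * K) := by
  simp only [amp, tensorFam_mul]
  congr 1
  ext j : 1
  split_ifs <;> simp

lemma amp_one {d n : ℕ} (i : Fin n) : amp i (1 : Matrix (Fin d) (Fin d) ℂ) = 1 := by
  simp [amp, tensorFam_one]

lemma amp_pow {d n : ℕ} (i : Fin n) (H : Matrix (Fin d) (Fin d) ℂ) (k : ℕ) :
    amp i H ^ k = amp i (H ^ k) := by
  induction k with
  | zero => simp [amp_one]
  | succ k ih => rw [pow_succ, ih, amp_mul, pow_succ]

lemma amp_commute {d n : ℕ} (i j : Fin n) (H : Matrix (Fin d) (Fin d) ℂ) :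
    amp i H * amp j H = amp j H * amp i H := by
  simp only [amp, tensorFam_mul]
  congr 1
  ext k : 1
  split_ifs <;> simp

lemma ampl_tensorFam_const {d l n : ℕ} (C : Matrix (Fin d) (Fin d) ℂ)
    (β : Finset (Fin n)) (hβ : β.card = l) :
    ampl (tensorFam fun _ : Fin l => C) β hβ = tensorFam fun j => if j ∈ β then C else 1 := by
  ext x y
  simp only [ampl, tensorFam, Matrix.of_apply]
  rw [← Finset.prod_mul_prod_compl β]
  congr 1
  · rw [← Finset.prod_attach β, Finset.attach_eq_univ,
      ← (β.orderIsoOfFin hβ).toEquiv.prod_comp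
        (fun j : β => (if (j : Fin n) ∈ β then C else 1) (x j) (y j))]
    refine Finset.prod_congr rfl fun i _ => ?_
    rw [if_pos (Subtype.prop _)]
    rfl
  · refine Finset.prod_congr rfl fun j hj => ?_
    rw [if_neg (Finset.mem_compl.mp hj), Matrix.one_apply]

/-- The `k`-th elementary symmetric function of the ampliations of `C`. -/
noncomputable def ampEsymm {d : ℕ} (n k : ℕ) (C : Matrix (Fin d) (Fin d) ℂ) :
    Matrix (Fin n → Fin d) (Fin n → Fin d) ℂ :=
  ∑ β ∈ Finset.powersetCard k (Finset.univ : Finset (Fin n)),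
    tensorFam fun j => if j ∈ β then C else 1

lemma ampEsymm_zero {d : ℕ} (n : ℕ) (C : Matrix (Fin d) (Fin d) ℂ) : ampEsymm n 0 C = 1 := by
  simp [ampEsymm, tensorFam_one]

open scoped IsMulCommutative in
lemma mul_ampEsymm_eq_sum {d : ℕ} (n k : ℕ) (C : Matrix (Fin d) (Fin d) ℂ) :
    (k : Matrix (Fin n → Fin d) (Fin n → Fin d) ℂ) * ampEsymm n k C =
      ∑ j ∈ Finset.range k,
        (-1) ^ (k + j + 1) * (ampEsymm n j C * ∑ i : Fin n, amp i (C ^ (k - j))) := by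
  classical
  have hcomm : ∀ a ∈ Set.range (fun i : Fin n => amp i C),
      ∀ b ∈ Set.range (fun i : Fin n => amp i C), a * b = b * a := by
    rintro _ ⟨i, rfl⟩ _ ⟨j, rfl⟩
    exact amp_commute i j C
  let S := Subring.closure (Set.range fun i : Fin n => amp i C)
  have : IsMulCommutative S := Subring.isMulCommutative_closure hcomm
  let x : Fin n → S := fun i => ⟨amp i C, Subring.subset_closure ⟨i, rfl⟩⟩
  let v : S →+* Matrix (Fin n → Fin d) (Fin n → Fin d) ℂ := S.subtype
  have hprod : ∀ β : Finset (Fin n),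
      v (∏ i ∈ β, x i) = tensorFam fun j => if j ∈ β then C else 1 := by
    intro β
    induction β using Finset.induction_on with
    | empty => simp [tensorFam_one]
    | insert a s ha ih =>
      rw [Finset.prod_insert ha, map_mul, ih]
      change amp a C * _ = _
      rw [amp, tensorFam_mul]
      congr 1
      ext j : 1
      by_cases hj : j = a
      · subst hj; simp [ha]
      · simp [hj]
  have he : ∀ j, v (MvPolynomial.aeval (R := ℤ) x (MvPolynomial.esymm (Fin n) ℤ j)) =
      ampEsymm n j C := by
    intro j
    simp only [MvPolynomial.esymm, map_sum, map_prod, MvPolynomial.aeval_X, ampEsymm]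
    exact Finset.sum_congr rfl fun β _ => hprod β
  have hp : ∀ j, v (MvPolynomial.aeval (R := ℤ) x (MvPolynomial.psum (Fin n) ℤ j)) =
      ∑ i : Fin n, amp i (C ^ j) := by
    intro j
    simp only [MvPolynomial.psum, map_sum, map_pow, MvPolynomial.aeval_X]
    exact Finset.sum_congr rfl fun i _ => amp_pow i C j
  have h := congrArg (fun q => v (MvPolynomial.aeval (R := ℤ) x q))
    (MvPolynomial.mul_esymm_eq_sum (Fin n) ℤ k)
  simp only [map_mul, map_natCast, map_sum, map_pow, map_neg, map_one, he, hp] at h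
  rw [h, Finset.sum_filter, Finset.Nat.sum_antidiagonal_eq_sum_range_succ_mk,
    Finset.sum_range_succ, if_neg (by simp), add_zero, Finset.mul_sum]
  refine Finset.sum_congr rfl fun j hj => ?_
  rw [if_pos (Finset.mem_range.mp hj), mul_assoc, ← mul_assoc, ← pow_add]
  congr 2
  omega

lemma prod_map_mem_lowDegree {ι : Type*} {l : ℕ} (w : List ι) (hw : w.length < l) :
    (w.map (FreeAlgebra.ι ℝ)).prod ∈ lowDegree ι l := by
  refine Submodule.subset_span ⟨w.length, hw, w.get, ?_⟩
  congr 1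
  conv_lhs => rw [← List.ofFn_get w, List.map_ofFn]
  rfl

lemma ι_mem_lowDegree {ι : Type*} (i : ι) : FreeAlgebra.ι ℝ i ∈ lowDegree ι 2 := by
  simpa using prod_map_mem_lowDegree (l := 2) [i] (by simp)

lemma mul_mem_lowDegree {ι : Type*} {j m k : ℕ} (h : j + m ≤ k + 1) {x y : FreeAlgebra ℝ ι}
    (hx : x ∈ lowDegree ι j) (hy : y ∈ lowDegree ι m) : x * y ∈ lowDegree ι k := by
  refine (?_ : lowDegree ι j * lowDegree ι m ≤ lowDegree ι k) (Submodule.mul_mem_mul hx hy)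
  rw [lowDegree, lowDegree, Submodule.span_mul_span, Submodule.span_le]
  rintro _ ⟨_, ⟨a, ha, v, rfl⟩, _, ⟨b, hb, w, rfl⟩, rfl⟩
  have := prod_map_mem_lowDegree (l := k) (List.ofFn v ++ List.ofFn w)
    (by simp only [List.length_append, List.length_ofFn]; omega)
  simpa [List.map_ofFn, Function.comp_def] using this

lemma pow_mem_lowDegree {ι : Type*} {x : FreeAlgebra ℝ ι} (hx : x ∈ lowDegree ι 2) (k : ℕ) :
    x ^ k ∈ lowDegree ι (k + 1) := by
  induction k with
  | zero => simpa using prod_map_mem_lowDegree (ι := ι) (l := 1) [] (by simp)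
  | succ k ih => exact pow_succ x k ▸ mul_mem_lowDegree (by omega) ih hx

section Correction

variable {ι R : Type*} [Ring R] [Algebra ℝ R]

/-- The span of the products `z ^ t * x` with `t + 2 ≤ k` and `x` a noncommutative polynomial
of degree less than `k` in the family `g`. -/
noncomputable def correctionSpan (g : ι → R) (z : R) (k : ℕ) : Submodule ℝ R :=
  Submodule.span ℝ {y | ∃ t : ℕ, t + 2 ≤ k ∧ ∃ x ∈ lowDegree ι k,
    y = z ^ t * FreeAlgebra.lift ℝ g x}

lemma mul_mem_correctionSpan {g : ι → R} {z : R} (hz : ∀ x, Commute z x) {i j m k : ℕ}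
    (hi : j + i ≤ k) (hm : j + m ≤ k + 1) {y : R} (hy : y ∈ correctionSpan g z j)
    {x : FreeAlgebra ℝ ι} (hx : x ∈ lowDegree ι m) :
    y * (z ^ i * FreeAlgebra.lift ℝ g x) ∈ correctionSpan g z k := by
  induction hy using Submodule.span_induction with
  | mem y hy =>
    obtain ⟨t, ht, w, hw, rfl⟩ := hy
    refine Submodule.subset_span ⟨t + i, by omega, w * x, mul_mem_lowDegree hm hw hx, ?_⟩
    rw [map_mul, pow_add, mul_assoc, ← mul_assoc _ (z ^ i), ← ((hz _).pow_left i).eq]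
    simp only [mul_assoc]
  | zero => simp
  | add a b _ _ ha hb => rw [add_mul]; exact add_mem ha hb
  | smul c a _ ha => rw [smul_mul_assoc]; exact Submodule.smul_mem _ c ha

/-- A sequence satisfying Newton's recursion is `F ^ k / k!` up to lower order corrections. -/
lemma newton_sub_mem_correctionSpan {g : ι → R} {z : R} (hz : ∀ x, Commute z x) {N : ℕ}
    (E Q M : ℕ → R) (F : R) (hE : E 0 = 1)
    (hrec : ∀ k : ℕ, (k : R) * E k =
      ∑ j ∈ Finset.range k, (-1) ^ (k + j + 1) * (E j * Q (k - j)))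
    (hQ1 : Q 1 = F) (hQ : ∀ i, Q (i + 2) = z ^ i * M (i + 2))
    (hF : ∃ x ∈ lowDegree ι 2, F = FreeAlgebra.lift ℝ g x)
    (hM : ∀ i ≤ N, ∃ x ∈ lowDegree ι 2, M i = FreeAlgebra.lift ℝ g x)
    (k : ℕ) (hk : k ≤ N) :
    E k - (k.factorial : ℝ)⁻¹ • F ^ k ∈ correctionSpan g z k := by
  obtain ⟨f, hf, rfl⟩ := hF
  induction k using Nat.strong_induction_on with
  | _ k ih =>
    rcases k with _ | m
    · simp [hE]
    have hr := hrec (m + 1)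
    rw [Finset.sum_range_succ, Nat.add_sub_cancel_left, hQ1] at hr
    have hsign : ((-1 : R)) ^ (m + 1 + m + 1) = 1 := Even.neg_one_pow ⟨m + 1, by omega⟩
    rw [hsign, one_mul] at hr
    have key : ((m + 1 : ℕ) : ℝ) • (E (m + 1) -
        ((m + 1).factorial : ℝ)⁻¹ • FreeAlgebra.lift ℝ g f ^ (m + 1)) =
        ∑ j ∈ Finset.range m, (-1) ^ (m + 1 + j + 1) * (E j * Q (m + 1 - j)) +
        (E m - (m.factorial : ℝ)⁻¹ • FreeAlgebra.lift ℝ g f ^ m) *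
          (z ^ 0 * FreeAlgebra.lift ℝ g f) := by
      rw [smul_sub, Nat.cast_smul_eq_nsmul, nsmul_eq_mul, hr, smul_smul, Nat.factorial_succ,
        Nat.cast_mul, mul_inv, ← mul_assoc, mul_inv_cancel₀ (by positivity), one_mul, pow_zero,
        one_mul, sub_mul, smul_mul_assoc, ← pow_succ, add_sub_assoc]
    have hmem : ((m + 1 : ℕ) : ℝ) • (E (m + 1) -
        ((m + 1).factorial : ℝ)⁻¹ • FreeAlgebra.lift ℝ g f ^ (m + 1)) ∈
        correctionSpan g z (m + 1) := by
      rw [key]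
      refine add_mem (sum_mem fun j hj => ?_)
        (mul_mem_correctionSpan hz (by omega) (by omega) (ih m (by omega) (by omega)) hf)
      have hj := Finset.mem_range.mp hj
      obtain ⟨i, rfl⟩ : ∃ i, m = j + i + 1 := ⟨m - j - 1, by omega⟩
      have hi : j + i + 1 + 1 - j = i + 2 := by omega
      obtain ⟨q, hq, hMq⟩ := hM (i + 2) (by omega)
      have h1 := mul_mem_correctionSpan (k := j + i + 1 + 1) hz (i := i) (by omega) (by omega)
        (ih j (by omega) (by omega)) hq
      have h2 : FreeAlgebra.lift ℝ g f ^ j * (z ^ i * FreeAlgebra.lift ℝ g q) ∈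
          correctionSpan g z (j + i + 1 + 1) := by
        refine Submodule.subset_span ⟨i, by omega, f ^ j * q,
          mul_mem_lowDegree (by omega) (pow_mem_lowDegree hf j) hq, ?_⟩
        rw [map_mul, map_pow, ← mul_assoc, ← ((hz _).pow_left i).eq, mul_assoc]
      have h3 : E j * Q (j + i + 1 + 1 - j) ∈ correctionSpan g z (j + i + 1 + 1) := by
        rw [hi, hQ, hMq]
        have := add_mem h1 (Submodule.smul_mem _ ((j.factorial : ℝ)⁻¹) h2)
        rwa [sub_mul, smul_mul_assoc, sub_add_cancel] at this
      rcases neg_one_pow_eq_or R (j + i + 1 + 1 + j + 1) with h | h <;> rw [h]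
      · simpa using h3
      · simpa using h3
    have := Submodule.smul_mem _ (((m + 1 : ℕ) : ℝ)⁻¹) hmem
    rwa [smul_smul, inv_mul_cancel₀ (by positivity), one_smul] at this

lemma exists_of_mem_correctionSpan {g : ι → R} {z : R} {k : ℕ} {y : R}
    (hy : y ∈ correctionSpan g z k) :
    ∃ P : Fin (k - 1) → FreeAlgebra ℝ ι, (∀ t, P t ∈ lowDegree ι k) ∧
      y = ∑ t : Fin (k - 1), z ^ (t : ℕ) * FreeAlgebra.lift ℝ g (P t) := by
  induction hy using Submodule.span_induction with
  | mem y hy =>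
    obtain ⟨t, ht, x, hx, rfl⟩ := hy
    refine ⟨Pi.single ⟨t, by omega⟩ x, fun s => ?_, ?_⟩
    · by_cases hs : s = ⟨t, by omega⟩
      · subst hs; simpa using hx
      · simp [hs]
    · rw [Fintype.sum_eq_single ⟨t, by omega⟩]
      · simp
      · intro s hs
        simp [hs]
  | zero => exact ⟨0, by simp, by simp⟩
  | add a b _ _ ha hb =>
    obtain ⟨P, hP, rfl⟩ := ha
    obtain ⟨Q, hQ, rfl⟩ := hb
    exact ⟨P + Q, fun t => add_mem (hP t) (hQ t), by
      simp [mul_add, Finset.sum_add_distrib]⟩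
  | smul c a _ ha =>
    obtain ⟨P, hP, rfl⟩ := ha
    exact ⟨c • P, fun t => Submodule.smul_mem _ c (hP t), by simp [Finset.smul_sum]⟩

end Correction

lemma lift_pi_apply {ι κ : Type*} {R : κ → Type*} [∀ n, Ring (R n)] [∀ n, Algebra ℝ (R n)]
    (g : ι → ∀ n, R n) (x : FreeAlgebra ℝ ι) (n : κ) :
    FreeAlgebra.lift ℝ g x n = FreeAlgebra.lift ℝ (fun i => g i n) x := by
  have : (Pi.evalAlgHom ℝ R n).comp (FreeAlgebra.lift ℝ g) =
      FreeAlgebra.lift ℝ fun i => g i n := by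
    ext i
    simp
  exact DFunLike.congr_fun this x

lemma sqrt_natCast_pow (n l : ℕ) : Real.sqrt ((n : ℝ) ^ l) = Real.sqrt n ^ l := by
  rw [Real.sqrt_eq_iff_mul_self_eq (by positivity) (by positivity), ← mul_pow,
    Real.mul_self_sqrt n.cast_nonneg]

lemma qUstat_symmetrized {d l n : ℕ} (hn : l ≤ n) (A : Fin l → Matrix (Fin d) (Fin d) ℂ) :
    ((l.factorial * n.choose l : ℝ) / Real.sqrt ((n : ℝ) ^ l)) •
        qUstat ((l.factorial : ℂ)⁻¹ • ∑ τ : Equiv.Perm (Fin l), tensorFam fun i => A (τ i)) n =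
      ∑ T : Finset (Fin l), (-1 : ℤ) ^ T.card •
        ((Real.sqrt n)⁻¹ ^ l • ampEsymm n l (∑ i ∈ Tᶜ, A i)) := by
  have hampl : ∀ (β : Finset (Fin n)) (hβ : β.card = l),
      ampl ((l.factorial : ℂ)⁻¹ • ∑ τ : Equiv.Perm (Fin l), tensorFam fun i => A (τ i)) β hβ =
        (l.factorial : ℂ)⁻¹ • ∑ T : Finset (Fin l), (-1 : ℤ) ^ T.card •
          tensorFam fun j => if j ∈ β then ∑ i ∈ Tᶜ, A i else 1 := by
    intro β hβ
    rw [sum_perm_tensorFam]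
    simp only [← ampl_tensorFam_const _ β hβ]
    ext x y
    simp only [ampl, Matrix.of_apply, Matrix.smul_apply, Matrix.sum_apply, smul_eq_mul,
      Finset.sum_mul, mul_assoc, smul_mul_assoc]
  have hsum : qUstat ((l.factorial : ℂ)⁻¹ •
      ∑ τ : Equiv.Perm (Fin l), tensorFam fun i => A (τ i)) n =
      ((n.choose l : ℂ)⁻¹ * (l.factorial : ℂ)⁻¹) •
        ∑ T : Finset (Fin l), (-1 : ℤ) ^ T.card • ampEsymm n l (∑ i ∈ Tᶜ, A i) := by
    simp only [qUstat, hampl]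
    rw [← Finset.smul_sum, smul_smul, Finset.sum_comm]
    congr 1
    refine Finset.sum_congr rfl fun T _ => ?_
    rw [← Finset.smul_sum, ampEsymm, Finset.sum_attach (Finset.powersetCard l Finset.univ)
      fun β : Finset (Fin n) => tensorFam fun j => if j ∈ β then ∑ i ∈ Tᶜ, A i else 1]
  have hc : (n.choose l : ℂ) ≠ 0 := by exact_mod_cast (Nat.choose_pos hn).ne'
  have hf : (l.factorial : ℂ) ≠ 0 := by exact_mod_cast l.factorial_ne_zero
  have hs : Real.sqrt ((n : ℝ) ^ l) = Real.sqrt n ^ l := sqrt_natCast_pow n l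
  rw [hsum, ← Complex.coe_smul, smul_smul]
  have : (((l.factorial * n.choose l : ℝ) / Real.sqrt ((n : ℝ) ^ l) : ℝ) : ℂ) *
      ((n.choose l : ℂ)⁻¹ * (l.factorial : ℂ)⁻¹) = (((Real.sqrt n)⁻¹ ^ l : ℝ) : ℂ) := by
    rw [hs]
    push_cast
    rw [inv_pow]
    field_simp
  rw [this, Complex.coe_smul, Finset.smul_sum]
  exact Finset.sum_congr rfl fun T _ => smul_comm _ _ _

lemma symProd_Fluct {d l n : ℕ} (A : Fin l → Matrix (Fin d) (Fin d) ℂ) :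
    symProd (fun i : Fin l => Fluct n (A i)) =
      ∑ T : Finset (Fin l), (-1 : ℤ) ^ T.card •
        ((l.factorial : ℝ)⁻¹ • Fluct n (∑ i ∈ Tᶜ, A i) ^ l) := by
  rw [symProd, sum_perm_prod_ofFn fun i => Fluct n (A i), Finset.smul_sum]
  exact Finset.sum_congr rfl fun T _ => by rw [smul_comm, Fluct_sum]

/-- The scaled elementary symmetric functions of the ampliations of a single matrix agree with
divided powers of its fluctuation, up to lower order corrections. -/
lemma scaled_ampEsymm_sub_mem_correctionSpan {d l : ℕ} {ι : Type*}
    (g : ι → ∀ n : ℕ, Matrix (Fin n → Fin d) (Fin n → Fin d) ℂ)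
    (C : Matrix (Fin d) (Fin d) ℂ)
    (hF : ∃ x ∈ lowDegree ι 2, (fun n => Fluct n C) = FreeAlgebra.lift ℝ g x)
    (hM : ∀ i ≤ l, ∃ x ∈ lowDegree ι 2, (fun n => Emp n (C ^ i)) = FreeAlgebra.lift ℝ g x) :
    (fun n : ℕ => (Real.sqrt n)⁻¹ ^ l • ampEsymm n l C - (l.factorial : ℝ)⁻¹ • Fluct n C ^ l) ∈
      correctionSpan g (fun n => algebraMap ℝ _ (Real.sqrt n)⁻¹) l := by
  refine newton_sub_mem_correctionSpan (N := l) (g := g)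
    (z := fun n => algebraMap ℝ _ (Real.sqrt n)⁻¹) ?_
    (fun k n => (Real.sqrt n)⁻¹ ^ k • ampEsymm n k C)
    (fun k n => (Real.sqrt n)⁻¹ ^ k • ∑ i : Fin n, amp i (C ^ k))
    (fun k n => Emp n (C ^ k)) (fun n => Fluct n C) ?_ ?_ ?_ ?_ hF hM l le_rfl
  · intro x
    ext1 n
    exact Algebra.commutes _ _
  · ext1 n
    simp [ampEsymm_zero]
  · intro k
    ext1 n
    rw [Pi.mul_apply, Pi.natCast_apply, mul_smul_comm, mul_ampEsymm_eq_sum, Finset.smul_sum,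
      Finset.sum_apply]
    refine Finset.sum_congr rfl fun j hj => ?_
    have hj := Finset.mem_range.mp hj
    simp only [Pi.mul_apply, Pi.pow_apply, Pi.neg_apply, Pi.one_apply]
    rw [smul_mul_smul_comm, ← pow_add, Nat.add_sub_cancel' hj.le, mul_smul_comm]
  · ext1 n
    simp [Fluct]
  · intro i
    ext1 n
    simp only [Pi.mul_apply, Pi.pow_apply]
    rw [← map_pow, ← Algebra.smul_def, Emp, smul_smul, pow_add]
    congr 2
    rw [inv_pow _ 2, Real.sq_sqrt (by positivity)]

/-- **Polynomial expression of a quantum U-statistic in fluctuations and empirical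
averages.** -/
theorem stmt10 {d l : ℕ} (ρ : Matrix (Fin d) (Fin d) ℂ)
    (hρ : ρ.PosDef) (hρtr : ρ.trace = 1)
    (A : Fin l → Matrix (Fin d) (Fin d) ℂ)
    (hA : ∀ i, (A i).IsHermitian)
    (hA0 : ∀ i, (ρ * A i).trace = 0) :
    ∃ (p : ℕ) (B : Fin p → Matrix (Fin d) (Fin d) ℂ),
      (∀ j, (B j).IsHermitian) ∧
      ∃ P : Fin (l - 1) → FreeAlgebra ℝ (Fin (l + p)),
        (∀ t, P t ∈ lowDegree (Fin (l + p)) l) ∧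
        ∀ n : ℕ, l ≤ n →
          ((l.factorial * n.choose l : ℝ) / Real.sqrt ((n : ℝ) ^ l)) •
              qUstat ((l.factorial : ℂ)⁻¹ •
                ∑ τ : Equiv.Perm (Fin l), tensorFam fun i => A (τ i)) n =
            symProd (fun i : Fin l => Fluct n (A i)) +
              ∑ t : Fin (l - 1),
                (Real.sqrt ((n : ℝ) ^ (t : ℕ)))⁻¹ •
                  FreeAlgebra.lift ℝ
                    (Fin.append (fun i : Fin l => Fluct n (A i))
                      (fun j : Fin p => Emp n (B j))) (P t) := by
  classical
  let e := Fintype.equivFin (Finset (Fin l) × Fin (l + 1))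
  let C : Finset (Fin l) → Matrix (Fin d) (Fin d) ℂ := fun T => ∑ i ∈ Tᶜ, A i
  let B : Fin (Fintype.card (Finset (Fin l) × Fin (l + 1))) → Matrix (Fin d) (Fin d) ℂ :=
    fun j => C (e.symm j).1 ^ ((e.symm j).2 : ℕ)
  have hC : ∀ T, (C T).IsHermitian := fun T => isSelfAdjoint_sum _ fun i _ => hA i
  refine ⟨_, B, fun j => (hC _).pow _, ?_⟩
  let g : Fin (l + Fintype.card (Finset (Fin l) × Fin (l + 1))) →
      ∀ n : ℕ, Matrix (Fin n → Fin d) (Fin n → Fin d) ℂ :=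
    Fin.append (fun i n => Fluct n (A i)) (fun j n => Emp n (B j))
  have hg : ∀ n, (fun i => g i n) =
      Fin.append (fun i : Fin l => Fluct n (A i)) (fun j => Emp n (B j)) := by
    intro n
    ext1 i
    refine Fin.addCases (fun i => ?_) (fun i => ?_) i <;> simp [g]
  have hmem : ∀ T, _ := fun T => scaled_ampEsymm_sub_mem_correctionSpan (l := l) g (C T)
    ⟨∑ i ∈ Tᶜ, FreeAlgebra.ι ℝ (Fin.castAdd _ i), sum_mem fun i _ => ι_mem_lowDegree _, by
      ext1 n
      simp [g, C, Fluct_sum]⟩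
    fun i hi => ⟨FreeAlgebra.ι ℝ (Fin.natAdd _ (e (T, ⟨i, by omega⟩))), ι_mem_lowDegree _, by
      ext1 n
      simp [g, B]⟩
  obtain ⟨P, hP, hPeq⟩ := exists_of_mem_correctionSpan
    (sum_mem (t := Finset.univ) fun T _ => zsmul_mem (hmem T) ((-1 : ℤ) ^ T.card))
  refine ⟨P, hP, fun n hn => ?_⟩
  have h := congrFun hPeq n
  rw [qUstat_symmetrized hn, symProd_Fluct, ← sub_eq_iff_eq_add', ← Finset.sum_sub_distrib]
  simp only [Finset.sum_apply, Pi.smul_apply, Pi.mul_apply, Pi.pow_apply, smul_sub,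
    lift_pi_apply, hg] at h
  refine h.trans (Finset.sum_congr rfl fun t _ => ?_)
  rw [← map_pow, ← Algebra.smul_def, sqrt_natCast_pow, inv_pow]
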